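/- Let Σ_Λ be a compact blur shift space (with the subspace topology inherited from the full blur shift Σ). Then the following statements are equivalent: (i) B_1(Λ) is countable; (ii) Σ_Λ is first countable; (iii) Σ_Λ is second countable; (iv) Σ_Λ is separable; (v) Σ_Λ is metrizable. -/

import Mathlib

open Set Filter Topology

namespace BlurPaper

/-- The extended alphabet `Ā = A ⊕ V`, where each blurred set `H ∈ V` is regarded
as a new symbol `H̃`. -/
abbrev Symb (A : Type*) (V : Set (Set A)) := A ⊕ {H : Set A // H ∈ V}

/-- `V` is a family of blurred sets: every member is infinite and two distinct members
have finite intersection. -/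
def IsBlurFamily {A : Type*} (V : Set (Set A)) : Prop :=
  (∀ H ∈ V, H.Infinite) ∧ ∀ G ∈ V, ∀ H ∈ V, G ≠ H → (G ∩ H).Finite

/-- The full blur shift `Σ`: sequences over `Ā` such that a blur symbol is followed
by the same blur symbol. -/
def FullBlur (A : Type*) (V : Set (Set A)) : Set (ℕ → Symb A V) :=
  {x | ∀ (i : ℕ) (H : {H : Set A // H ∈ V}), x i = Sum.inr H → x (i + 1) = Sum.inr H}

/-- Generalized cylinder `Z(α)`. -/
def Z (A : Type*) (V : Set (Set A)) (α : List A) : Set (FullBlur A V) :=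
  {x | ∀ i : Fin α.length, x.1 i = Sum.inl (α.get i)}

/-- Generalized cylinder `Z(α, H, F)`. -/
def ZH (A : Type*) (V : Set (Set A)) (α : List A) (H : {H : Set A // H ∈ V})
    (F : Set A) : Set (FullBlur A V) :=
  {x | (∀ i : Fin α.length, x.1 i = Sum.inl (α.get i)) ∧
    (x.1 α.length = Sum.inr H ∨ ∃ a ∈ H.1 \ F, x.1 α.length = Sum.inl a)}

/-- The collection of all generalized cylinders. -/
def Cylinders (A : Type*) (V : Set (Set A)) : Set (Set (FullBlur A V)) :=
  {U | ∃ α : List A, U = Z A V α} ∪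
  {U | ∃ (α : List A) (H : {H : Set A // H ∈ V}) (F : Set A),
    F ⊆ H.1 ∧ F.Finite ∧ U = ZH A V α H F}

/-- The topology on the full blur shift generated by the generalized cylinders. -/
def tau (A : Type*) (V : Set (Set A)) : TopologicalSpace (FullBlur A V) :=
  TopologicalSpace.generateFrom (Cylinders A V)

/-- The shift map on the full blur shift. -/
def shift (A : Type*) (V : Set (Set A)) : FullBlur A V → FullBlur A V :=
  fun x => ⟨fun i => x.1 (i + 1), fun i H h => x.2 (i + 1) H h⟩

/-- The shift map on `A^ℕ`. -/
def shiftSeq (A : Type*) : (ℕ → A) → ℕ → A := fun x i => x (i + 1)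

/-- The prodiscrete topology on `A^ℕ` (product of discrete topologies). -/
def prodDiscrete (A : Type*) : TopologicalSpace (ℕ → A) :=
  @Pi.topologicalSpace ℕ (fun _ => A) fun _ => ⊥

/-- A (classical) shift space over `A`: closed in the prodiscrete topology and
invariant under the shift map. -/
def IsShiftSpace {A : Type*} (Λ : Set (ℕ → A)) : Prop :=
  @IsClosed _ (prodDiscrete A) Λ ∧ ∀ x ∈ Λ, shiftSeq A x ∈ Λ

/-- `w ∈ B(Y)`: the finite word `w` appears as an initial word of some element of `Y`. -/
def InLang {A : Type*} (Y : Set (ℕ → A)) (w : List A) : Prop :=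
  ∃ x ∈ Y, ∀ i : Fin w.length, x i = w.get i

/-- The follower set `F_Y(w) = {a : w a ∈ B(Y)}`. -/
def Fol {A : Type*} (Y : Set (ℕ → A)) (w : List A) : Set A :=
  {a | InLang Y (w ++ [a])}

/-- The predecessor set `P_Y(a) = {b : b a ∈ B(Y)}`. -/
def Pred {A : Type*} (Y : Set (ℕ → A)) (a : A) : Set A :=
  {b | InLang Y [b, a]}

/-- `B₁(Y)`: the set of letters occurring in sequences of `Y`. -/
def letters {A : Type*} (Y : Set (ℕ → A)) : Set A :=
  {a | ∃ x ∈ Y, ∃ i, x i = a}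

/-- The canonical embedding `A^ℕ → Σ`. -/
def embed (A : Type*) (V : Set (Set A)) : (ℕ → A) → FullBlur A V :=
  fun x => ⟨fun i => Sum.inl (x i), fun _ _ h => absurd h (by simp)⟩

/-- The point `(a₀ … a_{n-1} H̃ H̃ H̃ …)` of the full blur shift. -/
def wordBlur {A : Type*} {V : Set (Set A)} (α : List A) (H : {H : Set A // H ∈ V}) :
    FullBlur A V :=
  ⟨fun i => if h : i < α.length then Sum.inl (α.get ⟨i, h⟩) else Sum.inr H, by
    intro i K hK
    by_cases h : i < α.length
    · simp only [dif_pos h] at hK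
      exact absurd hK (by simp)
    · simp only [dif_neg h] at hK
      simp only [dif_neg (by omega : ¬ i + 1 < α.length)]
      exact hK⟩

/-- The boundary `∂Y`: points `(a₀ … a_{n-1} H̃ H̃ …)` with `a₀ … a_{n-1} ∈ B(Y)` and
`F_Y(a₀ … a_{n-1}) ∩ H` infinite. -/
def boundary (A : Type*) (V : Set (Set A)) (Y : Set (ℕ → A)) : Set (FullBlur A V) :=
  {z | ∃ (α : List A) (H : {H : Set A // H ∈ V}),
    z = wordBlur α H ∧ InLang Y α ∧ (Fol Y α ∩ H.1).Infinite}

/-- The blur shift space `Σ_Y = Y ∪ ∂Y` of `Y` with resolution `V`. -/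
def SigmaOf (A : Type*) (V : Set (Set A)) (Y : Set (ℕ → A)) : Set (FullBlur A V) :=
  embed A V '' Y ∪ boundary A V Y

/-- The subspace topology inherited from the full blur shift. -/
def subTau (A : Type*) (V : Set (Set A)) (X : Set (FullBlur A V)) :
    TopologicalSpace X :=
  TopologicalSpace.induced Subtype.val (tau A V)

/-- `V_Λ`: the blurred sets that appear in `Σ_Λ`, i.e. those meeting `B₁(Λ)` in an
infinite set. -/
def VLam (A : Type*) (V : Set (Set A)) (Λ : Set (ℕ → A)) : Set (Set A) :=
  {H | H ∈ V ∧ (letters Λ ∩ H).Infinite}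


/-!
Let `X ⊆ Σ` be compact. The cylinders `Z(α)` and `Z(α, H, F)` are clopen and separate points, so
`X` embeds in a Cantor cube `2^S` for any family `S` of them separating its points. The `Z(α)` with
`α` in the language of `X` and the `Z(α, H, ∅)` with `αH̃H̃… ∈ X` form such a family. It is
countable if `X` has countably many letters: for fixed `α` the points `αH̃H̃… ∈ X` are finitely
many, since each of the open sets `Z(αa)`, `Z(α, H, ∅)` covering the compact set `X ∩ Z(α)`
contains at most one point of this form.

Conversely, let `X` be first countable and `αH̃H̃… ∈ X`. Points chosen in `X ∩ Z(αa)`, for the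
letters `a ∈ H` that may follow `α`, tend to `αH̃H̃…` along the cofinite filter but are never
equal to it, so there are only countably many such `a`. Since finitely many `Z(αa)` and
`Z(α, H, ∅)` with `αH̃H̃… ∈ X` cover `X ∩ Z(α)`, every word has countably many successors, and the
language of `X` is a tree with countable branching.
-/

section General

lemma secondCountableTopology_of_isCompact {X : Type*} [TopologicalSpace X] {s : Set X}
    (hs : IsCompact s) [HasCountableSeparatingOn X IsClopen s] : SecondCountableTopology s := by
  obtain ⟨S, hS, hclopen, hsep⟩ := exists_countable_separating X IsClopen s
  have : Countable S := hS.to_subtype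
  have : CompactSpace s := isCompact_iff_compactSpace.1 hs
  let φ : s → S → Bool := fun x U ↦ U.1.boolIndicator x.1
  have hφ : Continuous φ := continuous_pi fun U ↦
    ((continuous_boolIndicator_iff_isClopen _).2 (hclopen U U.2)).comp continuous_subtype_val
  have hinj : Function.Injective φ := fun x y hxy ↦ Subtype.ext <|
    hsep x x.2 y y.2 fun U hU ↦ by
      simpa only [φ, mem_iff_boolIndicator] using Bool.eq_iff_iff.1 (congrFun hxy ⟨U, hU⟩)
  exact (hφ.isClosedEmbedding hinj).isEmbedding.secondCountableTopology

lemma countable_of_countable_children {A : Type*} {S : Set (List A)}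
    (hprefix : ∀ α a, α ++ [a] ∈ S → α ∈ S)
    (hchildren : ∀ α ∈ S, {a | α ++ [a] ∈ S}.Countable) : S.Countable := by
  have hlevel (n : ℕ) : {α ∈ S | α.length = n}.Countable := by
    induction n with
    | zero =>
      refine (countable_singleton []).mono ?_
      rintro α ⟨-, hα⟩
      exact List.length_eq_zero_iff.1 hα
    | succ n ih =>
      refine (ih.biUnion fun α hα ↦ (hchildren α hα.1).image (α ++ [·])).mono ?_
      rintro β ⟨hβ, hlen⟩
      obtain rfl | ⟨α, a, rfl⟩ := List.eq_nil_or_concat' β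
      · simp at hlen
      · exact mem_iUnion₂.2 ⟨α, ⟨hprefix α a hβ, by simpa using hlen⟩, a, hβ, rfl⟩
  exact (countable_iUnion hlevel).mono fun α hα ↦ by simpa using hα

end General

section BlurShift

variable {A : Type*} {V : Set (Set A)} {X : Set (FullBlur A V)} {x y : FullBlur A V}
  {α β : List A} {a : A} {n : ℕ} {F : Set A} {G H : {H : Set A // H ∈ V}}

lemma mem_Z_iff : x ∈ Z A V α ↔ ∀ (i : ℕ) (h : i < α.length), x.1 i = Sum.inl α[i] :=
  ⟨fun h i hi ↦ h ⟨i, hi⟩, fun h i ↦ h i.1 i.2⟩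

lemma mem_ZH_iff : x ∈ ZH A V α H F ↔ x ∈ Z A V α ∧
    (x.1 α.length = Sum.inr H ∨ ∃ a ∈ H.1 \ F, x.1 α.length = Sum.inl a) := Iff.rfl

lemma mem_Z_nil : x ∈ Z A V [] := by simp [mem_Z_iff]

lemma mem_Z_concat :
    x ∈ Z A V (α ++ [a]) ↔ x ∈ Z A V α ∧ x.1 α.length = Sum.inl a := by
  simp only [mem_Z_iff, List.length_append, List.length_singleton, Nat.forall_lt_succ_right']
  grind

lemma Z_concat_eq_sdiff : Z A V (α ++ [a]) =
    Z A V α \ ((⋃ b ≠ a, Z A V (α ++ [b])) ∪ ⋃ H, ZH A V α H {a}) := by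
  ext x
  simp only [Set.mem_sdiff, mem_union, mem_iUnion, mem_Z_concat, mem_ZH_iff]
  rcases x.1 α.length with b | H <;> grind

lemma ZH_eq_sdiff : ZH A V α H F =
    Z A V α \ ((⋃ b ∈ (H.1 \ F)ᶜ, Z A V (α ++ [b])) ∪ ⋃ G ≠ H, ZH A V α G H.1) := by
  ext x
  simp only [Set.mem_sdiff, mem_union, mem_iUnion, mem_Z_concat, mem_ZH_iff]
  rcases x.1 α.length with b | G <;> grind

lemma eq_inr_of_le {m : ℕ} (h : x.1 m = Sum.inr H) (hmn : m ≤ n) : x.1 n = Sum.inr H := by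
  induction n, hmn using Nat.le_induction with
  | base => exact h
  | succ n _ ih => exact x.2 n H ih

lemma wordBlur_apply_of_lt (h : n < α.length) :
    (wordBlur α H).1 n = Sum.inl α[n] := by
  simp [wordBlur, h]

lemma wordBlur_apply_of_le (h : α.length ≤ n) : (wordBlur α H).1 n = Sum.inr H := by
  simp [wordBlur, h.not_gt]

lemma wordBlur_mem_Z : wordBlur α H ∈ Z A V α :=
  mem_Z_iff.2 fun _ ↦ wordBlur_apply_of_lt

lemma wordBlur_mem_ZH : wordBlur α H ∈ ZH A V α H F :=
  ⟨wordBlur_mem_Z, Or.inl (wordBlur_apply_of_le le_rfl)⟩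

lemma eq_wordBlur (hx : x ∈ Z A V α) (hH : x.1 α.length = Sum.inr H) : x = wordBlur α H := by
  ext1
  funext i
  obtain hi | hi := lt_or_ge i α.length
  · rw [mem_Z_iff.1 hx i hi, wordBlur_apply_of_lt hi]
  · rw [eq_inr_of_le hH hi, wordBlur_apply_of_le hi]

lemma exists_mem_Z_concat (h : x.1 n = Sum.inl a) :
    ∃ α, α.length = n ∧ x ∈ Z A V (α ++ [a]) := by
  induction n generalizing a with
  | zero => exact ⟨[], rfl, mem_Z_concat.2 ⟨mem_Z_nil, h⟩⟩
  | succ n ih =>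
    rcases hn : x.1 n with b | H
    · obtain ⟨α, rfl, hα⟩ := ih hn
      exact ⟨α ++ [b], by simp, mem_Z_concat.2 ⟨hα, by simpa using h⟩⟩
    · simp [x.2 n H hn] at h

lemma exists_eq_wordBlur (h : x.1 n = Sum.inr H) : ∃ α, x = wordBlur α H := by
  induction n with
  | zero => exact ⟨[], eq_wordBlur mem_Z_nil h⟩
  | succ n ih =>
    rcases hn : x.1 n with b | G
    · obtain ⟨α, rfl, hα⟩ := exists_mem_Z_concat hn
      exact ⟨α ++ [b], eq_wordBlur hα (by simpa using h)⟩
    · obtain rfl : G = H := Sum.inr_injective ((x.2 n G hn).symm.trans h)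
      exact ih hn

lemma eq_of_mem_cylinders (hZ : ∀ α, x ∈ Z A V α ↔ y ∈ Z A V α)
    (hZH : ∀ α H, x = wordBlur α H → y ∈ ZH A V α H ∅) : x = y := by
  by_cases hx : ∃ α H, x = wordBlur α H
  · obtain ⟨α, H, rfl⟩ := hx
    obtain ⟨hyα, hy | ⟨a, -, hy⟩⟩ := mem_ZH_iff.1 (hZH α H rfl)
    · exact (eq_wordBlur hyα hy).symm
    · have hword := (mem_Z_concat.1 ((hZ _).2 (mem_Z_concat.2 ⟨hyα, hy⟩))).2
      simp [wordBlur_apply_of_le le_rfl] at hword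
  · ext1
    funext n
    rcases hn : x.1 n with a | H
    · obtain ⟨α, rfl, hα⟩ := exists_mem_Z_concat hn
      exact (mem_Z_concat.1 ((hZ _).1 hα)).2.symm
    · obtain ⟨α, hα⟩ := exists_eq_wordBlur hn
      exact absurd ⟨α, H, hα⟩ hx

/-- The language of a set `X` of points of the full blur shift: the finite words over `A` with
which some point of `X` begins. -/
def language (X : Set (FullBlur A V)) : Set (List A) :=
  {α | (X ∩ Z A V α).Nonempty}

/-- The follower set of the word `α` in `X`, the analogue for `X ⊆ Σ` of `F_Λ(α)`. -/
def follower (X : Set (FullBlur A V)) (α : List A) : Set A :=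
  {a | α ++ [a] ∈ language X}

/-- The letters of `A` occurring in points of `X`, the analogue for `X ⊆ Σ` of `B₁(Λ)`; the
blur symbols are not counted. -/
def letterSet (X : Set (FullBlur A V)) : Set A :=
  {a | ∃ x ∈ X, ∃ n, x.1 n = Sum.inl a}

lemma letterSet_sigmaOf (Λ : Set (ℕ → A)) : letterSet (SigmaOf A V Λ) = letters Λ := by
  ext a
  constructor
  · rintro ⟨_, ⟨y, hy, rfl⟩ | ⟨α, H, rfl, ⟨y, hy, hyα⟩, -⟩, n, hn⟩
    · exact ⟨y, hy, n, Sum.inl_injective hn⟩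
    · obtain hlt | hle := lt_or_ge n α.length
      · rw [wordBlur_apply_of_lt hlt] at hn
        exact ⟨y, hy, n, (hyα ⟨n, hlt⟩).trans (Sum.inl_injective hn)⟩
      · simp [wordBlur_apply_of_le hle] at hn
  · rintro ⟨y, hy, n, rfl⟩
    exact ⟨embed A V y, Or.inl ⟨y, hy, rfl⟩, n, rfl⟩

lemma countable_language_iff : (language X).Countable ↔ (letterSet X).Countable := by
  constructor <;> intro h
  · refine (h.biUnion fun α _ ↦ α.finite_toSet.countable).mono ?_
    rintro a ⟨x, hx, n, hn⟩
    obtain ⟨α, -, hα⟩ := exists_mem_Z_concat hn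
    exact mem_iUnion₂.2 ⟨α ++ [a], ⟨x, hx, hα⟩, by simp⟩
  · have : Countable (letterSet X) := h.to_subtype
    refine (countable_range (List.map ((↑) : letterSet X → A))).mono ?_
    rintro α ⟨x, hx, hα⟩
    rw [range_list_map_coe]
    intro a ha
    obtain ⟨i, hi, rfl⟩ := List.getElem_of_mem ha
    exact ⟨x, hx, i, mem_Z_iff.1 hα i hi⟩

/-- The basic neighbourhoods of the points of `Z(α)`, indexed by the symbol `s` following `α`:
`Z(αa)` for a letter `s = a` and `Z(α, H, ∅)` for a blur symbol `s = H̃`. -/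
def symbolCylinder (α : List A) : Symb A V → Set (FullBlur A V) :=
  Sum.elim (fun a ↦ Z A V (α ++ [a])) fun H ↦ ZH A V α H ∅

lemma mem_symbolCylinder (hx : x ∈ Z A V α) : x ∈ symbolCylinder α (x.1 α.length) := by
  rcases h : x.1 α.length with a | H
  · exact mem_Z_concat.2 ⟨hx, h⟩
  · exact ⟨hx, Or.inl h⟩

lemma Z_subset_Z_of_wordBlur_mem (h : wordBlur α H ∈ Z A V β) : Z A V α ⊆ Z A V β := by
  intro x hx
  refine mem_Z_iff.2 fun i hi ↦ ?_
  have hword := mem_Z_iff.1 h i hi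
  obtain hlt | hle := lt_or_ge i α.length
  · rw [mem_Z_iff.1 hx i hlt, ← hword, wordBlur_apply_of_lt hlt]
  · simp [wordBlur_apply_of_le hle] at hword

lemma exists_finite_Z_concat_subset {s : Set (FullBlur A V)} (hs : s ∈ Cylinders A V)
    (h : wordBlur α H ∈ s) :
    ∃ F : Set A, F.Finite ∧ ∀ a ∈ H.1 \ F, Z A V (α ++ [a]) ⊆ s := by
  have hconcat (a : A) : Z A V (α ++ [a]) ⊆ Z A V α := fun x hx ↦ (mem_Z_concat.1 hx).1
  obtain ⟨β, rfl⟩ | ⟨β, G, F, -, hF, rfl⟩ := hs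
  · exact ⟨∅, finite_empty, fun a _ ↦ (hconcat a).trans (Z_subset_Z_of_wordBlur_mem h)⟩
  · obtain ⟨hβ, hG | ⟨b, hb, hbβ⟩⟩ := mem_ZH_iff.1 h
    · have hle : α.length ≤ β.length := by
        by_contra! hlt
        simp [wordBlur_apply_of_lt hlt] at hG
      have hge : β.length ≤ α.length := by
        by_contra! hlt
        have hword := mem_Z_iff.1 hβ _ hlt
        simp [wordBlur_apply_of_le le_rfl] at hword
      have hHG : H = G := Sum.inr_injective ((wordBlur_apply_of_le hle).symm.trans hG)
      subst hHG
      refine ⟨F, hF, fun a ha x hx ↦ ?_⟩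
      obtain ⟨hxα, hxa⟩ := mem_Z_concat.1 hx
      exact ⟨Z_subset_Z_of_wordBlur_mem hβ hxα, Or.inr ⟨a, ha, hle.antisymm hge ▸ hxa⟩⟩
    · refine ⟨∅, finite_empty, fun a _ x hx ↦ ?_⟩
      have hxβ := Z_subset_Z_of_wordBlur_mem (mem_Z_concat.2 ⟨hβ, hbβ⟩) (hconcat a hx)
      obtain ⟨hxβ, hxb⟩ := mem_Z_concat.1 hxβ
      exact ⟨hxβ, Or.inr ⟨b, hb, hxb⟩⟩

local instance : TopologicalSpace (FullBlur A V) := tau A V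

lemma isOpen_Z : IsOpen (Z A V α) :=
  TopologicalSpace.isOpen_generateFrom_of_mem (Or.inl ⟨α, rfl⟩)

lemma isOpen_ZH (hF : (H.1 ∩ F).Finite) : IsOpen (ZH A V α H F) := by
  have hZH : ZH A V α H F = ZH A V α H (H.1 ∩ F) := by simp only [ZH, sdiff_self_inter]
  exact TopologicalSpace.isOpen_generateFrom_of_mem
    (Or.inr ⟨α, H, H.1 ∩ F, inter_subset_left, hF, hZH⟩)

lemma isOpen_symbolCylinder (s : Symb A V) : IsOpen (symbolCylinder α s) := by
  cases s with
  | inl a => exact isOpen_Z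
  | inr H => exact isOpen_ZH (by simp)

lemma isClopen_Z : IsClopen (Z A V α) := by
  refine ⟨?_, isOpen_Z⟩
  induction α using List.reverseRecOn with
  | nil => simp [eq_univ_of_forall fun _ : FullBlur A V ↦ mem_Z_nil]
  | append_singleton α a ih =>
    rw [Z_concat_eq_sdiff]
    exact ih.sdiff <| (isOpen_biUnion fun _ _ ↦ isOpen_Z).union <|
      isOpen_iUnion fun _ ↦ isOpen_ZH ((finite_singleton a).inter_of_right _)

lemma isClopen_ZH (hV : V.Pairwise fun G H ↦ (G ∩ H).Finite) (hF : (H.1 ∩ F).Finite) :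
    IsClopen (ZH A V α H F) := by
  refine ⟨?_, isOpen_ZH hF⟩
  rw [ZH_eq_sdiff]
  exact isClopen_Z.isClosed.sdiff <| (isOpen_biUnion fun _ _ ↦ isOpen_Z).union <|
    isOpen_biUnion fun G hG ↦ isOpen_ZH (hV G.2 H.2 fun h ↦ hG (Subtype.ext h))

lemma totallySeparatedSpace_fullBlur (hV : V.Pairwise fun G H ↦ (G ∩ H).Finite) :
    TotallySeparatedSpace (FullBlur A V) := by
  refine totallySeparatedSpace_iff_exists_isClopen.2 fun x y hxy ↦ ?_
  by_contra! hclopen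
  have hmem (U : Set (FullBlur A V)) (hU : IsClopen U) (hx : x ∈ U) : y ∈ U := by
    simpa using hclopen U hU hx
  refine hxy (eq_of_mem_cylinders (fun α ↦ ⟨hmem _ isClopen_Z, ?_⟩) ?_)
  · exact fun hy ↦ by_contra fun hx ↦ hmem _ isClopen_Z.compl hx hy
  · rintro α H rfl
    exact hmem _ (isClopen_ZH hV (by simp)) wordBlur_mem_ZH

lemma exists_finite_symbolCylinder_cover (hX : IsCompact X) (α : List A) :
    ∃ T ⊆ (fun x : FullBlur A V ↦ x.1 α.length) '' (X ∩ Z A V α), T.Finite ∧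
      X ∩ Z A V α ⊆ ⋃ s ∈ T, symbolCylinder α s :=
  (hX.inter_right isClopen_Z.isClosed).elim_finite_subcover_image
    (fun s _ ↦ isOpen_symbolCylinder s) fun _ hx ↦
      mem_iUnion₂.2 ⟨_, mem_image_of_mem _ hx, mem_symbolCylinder hx.2⟩

lemma finite_setOf_wordBlur_mem (hX : IsCompact X) (α : List A) :
    {H | wordBlur α H ∈ X}.Finite := by
  obtain ⟨T, -, hT, hcover⟩ := exists_finite_symbolCylinder_cover hX α
  refine (hT.preimage Sum.inr_injective.injOn).subset fun H hH ↦ ?_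
  obtain ⟨s, hs, hHs⟩ := mem_iUnion₂.1 (hcover ⟨hH, wordBlur_mem_Z⟩)
  have hlast : (wordBlur α H).1 α.length = Sum.inr H := wordBlur_apply_of_le le_rfl
  cases s with
  | inl a => simp [(mem_Z_concat.1 hHs).2] at hlast
  | inr G =>
    obtain ⟨-, hG | ⟨a, -, ha⟩⟩ := mem_ZH_iff.1 hHs
    · rwa [mem_preimage, ← hlast, hG]
    · simp [ha] at hlast

lemma countable_follower (hX : IsCompact X)
    (hblur : ∀ H, wordBlur α H ∈ X → (H.1 ∩ follower X α).Countable) :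
    (follower X α).Countable := by
  obtain ⟨T, hTX, hT, hcover⟩ := exists_finite_symbolCylinder_cover hX α
  have hcountable : ∀ s ∈ T,
      {a ∈ follower X α | (symbolCylinder α s ∩ Z A V (α ++ [a])).Nonempty}.Countable := by
    rintro (b | H) hs
    · refine (countable_singleton b).mono ?_
      rintro a ⟨-, x, hxb, hxa⟩
      exact Sum.inl_injective ((mem_Z_concat.1 hxa).2.symm.trans (mem_Z_concat.1 hxb).2)
    · obtain ⟨x, ⟨hxX, hxα⟩, hxH⟩ := hTX hs
      refine (hblur H (eq_wordBlur hxα hxH ▸ hxX)).mono ?_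
      rintro a ⟨ha, y, hyH, hya⟩
      have hy := (mem_ZH_iff.1 hyH).2
      exact ⟨by simpa [(mem_Z_concat.1 hya).2] using hy, ha⟩
  refine (hT.countable.biUnion hcountable).mono ?_
  rintro a ⟨x, hxX, hxa⟩
  obtain ⟨s, hs, hxs⟩ := mem_iUnion₂.1 (hcover ⟨hxX, (mem_Z_concat.1 hxa).1⟩)
  exact mem_iUnion₂.2 ⟨s, hs, ⟨x, hxX, hxa⟩, x, hxs, hxa⟩

lemma tendsto_wordBlur {ι : Type*} {l : Filter ι} {u : ι → A} (hu : Tendsto u l cofinite)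
    (huH : ∀ i, u i ∈ H.1) {f : ι → FullBlur A V} (hf : ∀ i, f i ∈ Z A V (α ++ [u i])) :
    Tendsto f l (𝓝 (wordBlur α H)) := by
  refine TopologicalSpace.tendsto_nhds_generateFrom_iff.2 fun s hs hmem ↦ ?_
  obtain ⟨F, hF, hsub⟩ := exists_finite_Z_concat_subset hs hmem
  filter_upwards [hu hF.compl_mem_cofinite] with i hi
  exact hsub (u i) ⟨huH i, hi⟩ (hf i)

lemma countable_inter_follower [FirstCountableTopology X] (hH : wordBlur α H ∈ X) :
    (H.1 ∩ follower X α).Countable := by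
  have hword (a : (H.1 ∩ follower X α : Set A)) : ∃ x : X, x.1 ∈ Z A V (α ++ [a.1]) :=
    let ⟨x, hxX, hx⟩ := a.2.2
    ⟨⟨x, hxX⟩, hx⟩
  choose f hf using hword
  have hlim : Tendsto f cofinite (𝓝 ⟨wordBlur α H, hH⟩) := tendsto_subtype_rng.2 <|
    tendsto_wordBlur Subtype.val_injective.tendsto_cofinite (fun a ↦ a.2.1) hf
  have hker : f ⁻¹' (𝓝 ⟨wordBlur α H, hH⟩).ker = ∅ := eq_empty_of_forall_notMem fun a ha ↦ by
    have hopen : IsOpen (ZH A V α H {a.1}) := isOpen_ZH ((finite_singleton a.1).inter_of_right _)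
    have hmem := mem_ker.1 ha _ <| (hopen.preimage continuous_subtype_val).mem_nhds wordBlur_mem_ZH
    have hlast := (mem_ZH_iff.1 hmem).2
    simp [(mem_Z_concat.1 (hf a)).2] at hlast
  have hcountable := hlim.countable_compl_preimage_ker
  rwa [hker, compl_empty, countable_univ_iff, countable_coe_iff] at hcountable

lemma countable_letterSet_of_firstCountable (hX : IsCompact X) [FirstCountableTopology X] :
    (letterSet X).Countable := by
  refine countable_language_iff.1 (countable_of_countable_children ?_ fun α _ ↦ ?_)
  · rintro α a ⟨x, hxX, hx⟩
    exact ⟨x, hxX, (mem_Z_concat.1 hx).1⟩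
  · exact countable_follower hX fun H ↦ countable_inter_follower

lemma countable_letterSet_of_separable [TopologicalSpace.SeparableSpace X] :
    (letterSet X).Countable := by
  obtain ⟨D, hD, hdense⟩ := TopologicalSpace.exists_countable_dense X
  refine ((hD.biUnion fun d _ ↦ countable_range d.1.1).preimage Sum.inl_injective).mono ?_
  rintro a ⟨x, hxX, n, hn⟩
  obtain ⟨α, rfl, hα⟩ := exists_mem_Z_concat hn
  obtain ⟨d, hdα, hdD⟩ :=
    hdense.exists_mem_open (isOpen_Z.preimage continuous_subtype_val) ⟨⟨x, hxX⟩, hα⟩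
  exact mem_iUnion₂.2 ⟨d, hdα, α.length, (mem_Z_concat.1 hdD).2⟩

lemma countable_setOf_wordBlur_mem (hX : IsCompact X) (h : (letterSet X).Countable) :
    {p : List A × {H : Set A // H ∈ V} | wordBlur p.1 p.2 ∈ X}.Countable := by
  refine ((countable_language_iff.2 h).biUnion fun α _ ↦
    ((finite_setOf_wordBlur_mem hX α).image (Prod.mk α)).countable).mono ?_
  rintro ⟨α, H⟩ hH
  exact mem_iUnion₂.2 ⟨α, ⟨_, hH, wordBlur_mem_Z⟩, H, hH, rfl⟩

lemma hasCountableSeparatingOn_isClopen (hV : V.Pairwise fun G H ↦ (G ∩ H).Finite)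
    (hX : IsCompact X) (h : (letterSet X).Countable) :
    HasCountableSeparatingOn (FullBlur A V) IsClopen X := by
  refine ⟨Z A V '' language X ∪
    (fun p : List A × {H : Set A // H ∈ V} ↦ ZH A V p.1 p.2 ∅) '' {p | wordBlur p.1 p.2 ∈ X},
    ?_, ?_, ?_⟩
  · exact ((countable_language_iff.2 h).image _).union
      ((countable_setOf_wordBlur_mem hX h).image _)
  · rintro _ (⟨α, -, rfl⟩ | ⟨p, -, rfl⟩)
    · exact isClopen_Z
    · exact isClopen_ZH hV (by simp)
  · refine fun x hx y hy hsep ↦ eq_of_mem_cylinders (fun α ↦ ?_) ?_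
    · by_cases hα : α ∈ language X
      · exact hsep _ (Or.inl ⟨α, hα, rfl⟩)
      · exact iff_of_false (fun hxα ↦ hα ⟨x, hx, hxα⟩) fun hyα ↦ hα ⟨y, hy, hyα⟩
    · rintro α H rfl
      exact (hsep _ (Or.inr ⟨(α, H), hx, rfl⟩)).1 wordBlur_mem_ZH

theorem compact_tfae_general (hV : V.Pairwise fun G H ↦ (G ∩ H).Finite) (hX : IsCompact X) :
    List.TFAE [(letterSet X).Countable, FirstCountableTopology X, SecondCountableTopology X,
      TopologicalSpace.SeparableSpace X, TopologicalSpace.MetrizableSpace X] := by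
  have : CompactSpace X := isCompact_iff_compactSpace.1 hX
  have : TotallySeparatedSpace (FullBlur A V) := totallySeparatedSpace_fullBlur hV
  tfae_have 1 → 3 := fun h ↦
    have := hasCountableSeparatingOn_isClopen hV hX h
    secondCountableTopology_of_isCompact hX
  tfae_have 3 → 5 := fun _ ↦ inferInstance
  tfae_have 5 → 2 := fun _ ↦ inferInstance
  tfae_have 2 → 1 := fun _ ↦ countable_letterSet_of_firstCountable hX
  tfae_have 3 → 4 := fun _ ↦ inferInstance
  tfae_have 4 → 1 := fun _ ↦ countable_letterSet_of_separable
  tfae_finish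

end BlurShift

/-- For a compact blur shift space `Σ_Λ` the following are
equivalent: `B₁(Λ)` countable, first countable, second countable, separable,
metrizable. -/
theorem compact_tfae {A : Type*} (V : Set (Set A))
    (hV : IsBlurFamily V) (Λ : Set (ℕ → A)) (hΛ : IsShiftSpace Λ)
    (hc : @IsCompact _ (tau A V) (SigmaOf A V Λ)) :
    List.TFAE
      [(letters Λ).Countable,
        @FirstCountableTopology (SigmaOf A V Λ) (subTau A V (SigmaOf A V Λ)),
        @SecondCountableTopology (SigmaOf A V Λ) (subTau A V (SigmaOf A V Λ)),
        @TopologicalSpace.SeparableSpace (SigmaOf A V Λ) (subTau A V (SigmaOf A V Λ)),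
        @TopologicalSpace.MetrizableSpace (SigmaOf A V Λ)
          (subTau A V (SigmaOf A V Λ))] := by
  rw [← letterSet_sigmaOf (V := V)]
  exact compact_tfae_general (fun G hG H hH ↦ hV.2 G hG H hH) hc

end BlurPaper
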